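/- For all k ∈ ℝ one has the commutation identity ε₁ (d/dk) 𝒯_b(f₁,f₂,f₃)(k) = −ε₂ 𝒯_b(f₁',f₂,f₃)(k) + ε₃ 𝒯_b(f₁,f₂',f₃)(k) − ε₄ 𝒯_b(f₁,f₂,f₃')(k) − 2it 𝒯_{b̃}(f₁,f₂,f₃)(k), where b̃(y) := y·b(y). -/

import Mathlib

open MeasureTheory Filter Topology Set

/-- The trilinear form
`𝒯_b(f₁,f₂,f₃)(k) = ∭ e^{it(−k²+ℓ²−m²+n²)} f₁(ℓ) conj(f₂(m)) f₃(n) b(ε₁k+ε₂ℓ+ε₃m+ε₄n)`. -/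
noncomputable def Tform (t e1 e2 e3 e4 : ℝ) (b f1 f2 f3 : ℝ → ℂ) (k : ℝ) : ℂ :=
  ∫ l : ℝ, ∫ m : ℝ, ∫ n : ℝ,
    Complex.exp (Complex.I * (t : ℂ) * ((-(k ^ 2) + l ^ 2 - m ^ 2 + n ^ 2 : ℝ) : ℂ)) *
      f1 l * (starRingEnd ℂ) (f2 m) * f3 n * b (e1 * k + e2 * l + e3 * m + e4 * n)

/-!
The form is Galilean covariant. Move the four frequencies along
`(k, l, m, n) ↦ (k + ε₁ s, l - ε₂ s, m + ε₃ s, n - ε₄ s)`. Since `ε₁² + ε₃² = ε₂² + ε₄²`, the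
argument `y = ε₁ k + ε₂ l + ε₃ m + ε₄ n` of `b` is constant along this motion, and the phase
`-k² + l² - m² + n²` changes by exactly `-2 s y`. Hence translating `k` by `ε₁ s` amounts to
translating the three profiles and multiplying `b` by `exp (-2 i t s y)`. Differentiating at `s = 0`
gives the commutation identity; no derivative ever falls on `b`.
-/

section TranslationDominated

/-- The class of differentiable functions `f` such that `f` and `f'` lie in the Wiener amalgam space
`W(L^∞, L¹)`: all their sufficiently small translates share one integrable majorant. This is what
allows integrals of translates of `f` to be differentiated under the integral sign. -/
structure IsTranslationDominated (f : ℝ → ℂ) : Prop where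
  differentiable : Differentiable ℝ f
  exists_majorant : ∃ g : ℝ → ℝ, Integrable g ∧
    ∀ᶠ h in 𝓝 0, ∀ x, ‖f (x + h)‖ ≤ g x ∧ ‖deriv f (x + h)‖ ≤ g x

namespace IsTranslationDominated

variable {f : ℝ → ℂ}

lemma integrable (hf : IsTranslationDominated f) : Integrable f := by
  obtain ⟨g, hg, hfg⟩ := hf.exists_majorant
  refine hg.mono' hf.differentiable.continuous.aestronglyMeasurable (.of_forall fun x => ?_)
  simpa only [add_zero] using (hfg.self_of_nhds x).1

lemma integrable_deriv (hf : IsTranslationDominated f) : Integrable (deriv f) := by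
  obtain ⟨g, hg, hfg⟩ := hf.exists_majorant
  refine hg.mono' (aestronglyMeasurable_deriv f _) (.of_forall fun x => ?_)
  simpa only [add_zero] using (hfg.self_of_nhds x).2

end IsTranslationDominated

lemma exists_integrable_forall_norm_translate_le {E F : Type*} [NormedAddCommGroup E]
    [NormedSpace ℝ E] [FiniteDimensional ℝ E] [MeasurableSpace E] [BorelSpace E]
    [NormedAddCommGroup F] [NormedSpace ℝ F] (μ : Measure E) [μ.IsAddHaarMeasure]
    (f : SchwartzMap E F) :
    ∃ g : E → ℝ, Integrable g μ ∧ ∀ x h, ‖h‖ ≤ 1 → ‖f (x + h)‖ ≤ g x := by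
  set N := Module.finrank ℝ E + 1 with hN
  obtain ⟨C, hC⟩ : ∃ C, ∀ x, (1 + ‖x‖) ^ N * ‖f x‖ ≤ C :=
    ⟨_, fun x => by
      simpa only [norm_iteratedFDeriv_zero] using
        SchwartzMap.one_add_le_sup_seminorm_apply (𝕜 := ℝ) (m := (N, 0)) le_rfl le_rfl f x⟩
  refine ⟨fun x => 2 ^ N * C * (1 + ‖x‖) ^ (-(N : ℝ)),
    (integrable_one_add_norm (by rw [hN]; push_cast; linarith)).const_mul _, fun x h hh => ?_⟩
  have peetre : 1 + ‖x‖ ≤ 2 * (1 + ‖x + h‖) := by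
    have : ‖x‖ ≤ ‖x + h‖ + ‖h‖ := by simpa only [add_sub_cancel_right] using norm_sub_le (x + h) h
    linarith [norm_nonneg (x + h)]
  beta_reduce
  rw [Real.rpow_neg (by positivity), Real.rpow_natCast, ← div_eq_mul_inv,
    le_div_iff₀ (by positivity)]
  calc ‖f (x + h)‖ * (1 + ‖x‖) ^ N
      ≤ ‖f (x + h)‖ * (2 * (1 + ‖x + h‖)) ^ N := by gcongr
    _ = 2 ^ N * ((1 + ‖x + h‖) ^ N * ‖f (x + h)‖) := by rw [mul_pow]; ring
    _ ≤ 2 ^ N * C := by gcongr; exact hC _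

lemma IsTranslationDominated.of_schwartzMap (f : SchwartzMap ℝ ℂ) : IsTranslationDominated f where
  differentiable := f.differentiable
  exists_majorant := by
    obtain ⟨g, hg, hfg⟩ := exists_integrable_forall_norm_translate_le volume f
    obtain ⟨g', hg', hfg'⟩ :=
      exists_integrable_forall_norm_translate_le volume (SchwartzMap.derivCLM ℂ ℂ f)
    refine ⟨fun x => max (g x) (g' x), hg.sup hg', ?_⟩
    filter_upwards [Metric.closedBall_mem_nhds (0 : ℝ) one_pos] with h hh x
    have h_norm : ‖h‖ ≤ 1 := mem_closedBall_zero_iff.mp hh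
    exact ⟨le_max_of_le_left (hfg x h h_norm), le_max_of_le_right (hfg' x h h_norm)⟩

end TranslationDominated

section Modulation

/-- The modulation of `b` at frequency `ξ`, without the factor `2π` usual in time-frequency
analysis. It records the phase that `b` picks up along the Galilean motion. -/
noncomputable def modulation (ξ : ℝ) (b : ℝ → ℂ) (y : ℝ) : ℂ :=
  Complex.exp ((ξ * y : ℝ) * Complex.I) * b y

variable {b : ℝ → ℂ}

@[simp]
lemma modulation_zero (b : ℝ → ℂ) : modulation 0 b = b := by
  ext y
  simp [modulation]

@[simp]
lemma norm_modulation (ξ : ℝ) (b : ℝ → ℂ) (y : ℝ) : ‖modulation ξ b y‖ = ‖b y‖ := by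
  rw [modulation, norm_mul, Complex.norm_exp_ofReal_mul_I, one_mul]

lemma measurable_modulation (ξ : ℝ) (hb : Measurable b) : Measurable (modulation ξ b) := by
  unfold modulation
  fun_prop

lemma hasDerivAt_modulation (ω : ℝ) (b : ℝ → ℂ) (y s : ℝ) :
    HasDerivAt (fun s => modulation (ω * s) b y)
      (ω * Complex.I * modulation (ω * s) (fun y => y * b y) y) s := by
  have phase : HasDerivAt (fun s : ℝ => ω * s * y) (ω * y) s := by
    simpa using ((hasDerivAt_id s).const_mul ω).mul_const y
  refine ((phase.ofReal_comp.mul_const Complex.I).cexp.mul_const (b y)).congr_deriv ?_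
  simp only [modulation]
  push_cast
  ring

end Modulation

section Integrand

/-- The integrand of `Tform` as a function of `p = (l, m, n)`, for integrating over the product
space `ℝ × ℝ × ℝ`. -/
noncomputable def tformIntegrand (t e1 e2 e3 e4 : ℝ) (b f1 f2 f3 : ℝ → ℂ) (k : ℝ)
    (p : ℝ × ℝ × ℝ) : ℂ :=
  Complex.exp (Complex.I * (t : ℂ) * ((-(k ^ 2) + p.1 ^ 2 - p.2.1 ^ 2 + p.2.2 ^ 2 : ℝ) : ℂ)) *
    f1 p.1 * (starRingEnd ℂ) (f2 p.2.1) * f3 p.2.2 * b (e1 * k + e2 * p.1 + e3 * p.2.1 + e4 * p.2.2)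

variable {t e1 e2 e3 e4 k C : ℝ} {b f1 f2 f3 : ℝ → ℂ}

lemma norm_cexp_I_mul_ofReal_mul_ofReal (t x : ℝ) : ‖Complex.exp (Complex.I * t * x)‖ = 1 := by
  rw [mul_assoc, ← Complex.ofReal_mul, Complex.norm_exp_I_mul_ofReal]

lemma norm_tformIntegrand (p : ℝ × ℝ × ℝ) :
    ‖tformIntegrand t e1 e2 e3 e4 b f1 f2 f3 k p‖ =
      ‖f1 p.1‖ * (‖f2 p.2.1‖ * ‖f3 p.2.2‖) *
        ‖b (e1 * k + e2 * p.1 + e3 * p.2.1 + e4 * p.2.2)‖ := by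
  simp only [tformIntegrand, norm_mul, norm_cexp_I_mul_ofReal_mul_ofReal, RCLike.norm_conj]
  ring

lemma integrable_tformIntegrand (hb : Measurable b) (hbC : ∀ y, ‖b y‖ ≤ C)
    (h1 : Integrable f1) (h2 : Integrable f2) (h3 : Integrable f3) :
    Integrable (tformIntegrand t e1 e2 e3 e4 b f1 f2 f3 k) := by
  have profiles : Integrable fun p : ℝ × ℝ × ℝ => f1 p.1 * (starRingEnd ℂ (f2 p.2.1) * f3 p.2.2) :=
    h1.mul_prod (((LinearIsometryEquiv.integrable_comp_iff Complex.conjLIE).2 h2).mul_prod h3)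
  have kernel_measurable : Measurable fun p : ℝ × ℝ × ℝ =>
      Complex.exp (Complex.I * t * ((-(k ^ 2) + p.1 ^ 2 - p.2.1 ^ 2 + p.2.2 ^ 2 : ℝ) : ℂ)) *
        b (e1 * k + e2 * p.1 + e3 * p.2.1 + e4 * p.2.2) := by
    fun_prop
  refine (profiles.bdd_mul (c := C) kernel_measurable.aestronglyMeasurable
    (.of_forall fun p => ?_)).congr (.of_forall fun p => ?_)
  · rw [norm_mul, norm_cexp_I_mul_ofReal_mul_ofReal, one_mul]
    exact hbC _
  · simp only [tformIntegrand]
    ring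

lemma tform_eq_integral (h : Integrable (tformIntegrand t e1 e2 e3 e4 b f1 f2 f3 k)) :
    Tform t e1 e2 e3 e4 b f1 f2 f3 k = ∫ p, tformIntegrand t e1 e2 e3 e4 b f1 f2 f3 k p := by
  rw [Measure.volume_eq_prod] at h ⊢
  rw [integral_prod _ h]
  refine integral_congr_ae ?_
  filter_upwards [h.prod_right_ae] with l hl
  rw [Measure.volume_eq_prod] at hl ⊢
  exact (integral_prod _ hl).symm

end Integrand

section Flow

variable (t e1 e2 e3 e4 ω c1 c2 c3 k : ℝ) (b f1 f2 f3 : ℝ → ℂ)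

/-- The integrand of `Tform` at time `s`, when each `fᵢ` is translated with velocity `cᵢ` and `b` is
modulated at rate `ω`; the Galilean motion is one choice of these rates. -/
noncomputable def flowIntegrand (s : ℝ) : ℝ × ℝ × ℝ → ℂ :=
  tformIntegrand t e1 e2 e3 e4 (modulation (ω * s) b) (fun x => f1 (x + c1 * s))
    (fun x => f2 (x + c2 * s)) (fun x => f3 (x + c3 * s)) k

/-- The time derivative of `flowIntegrand`, written in terms of flow integrands so that both its
bound and its integral come from theirs. -/
noncomputable def flowIntegrandDeriv (s : ℝ) (p : ℝ × ℝ × ℝ) : ℂ :=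
  c1 * flowIntegrand t e1 e2 e3 e4 ω c1 c2 c3 k b (deriv f1) f2 f3 s p
    + c2 * flowIntegrand t e1 e2 e3 e4 ω c1 c2 c3 k b f1 (deriv f2) f3 s p
    + c3 * flowIntegrand t e1 e2 e3 e4 ω c1 c2 c3 k b f1 f2 (deriv f3) s p
    + ω * Complex.I * flowIntegrand t e1 e2 e3 e4 ω c1 c2 c3 k (fun y => y * b y) f1 f2 f3 s p

variable {t e1 e2 e3 e4 ω c1 c2 c3 k b f1 f2 f3}

lemma flowIntegrand_zero :
    flowIntegrand t e1 e2 e3 e4 ω c1 c2 c3 k b f1 f2 f3 0 =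
      tformIntegrand t e1 e2 e3 e4 b f1 f2 f3 k := by
  simp only [flowIntegrand, mul_zero, add_zero, modulation_zero]

lemma integrable_flowIntegrand {C : ℝ} (hb : Measurable b) (hbC : ∀ y, ‖b y‖ ≤ C)
    (h1 : Integrable f1) (h2 : Integrable f2) (h3 : Integrable f3) (s : ℝ) :
    Integrable (flowIntegrand t e1 e2 e3 e4 ω c1 c2 c3 k b f1 f2 f3 s) :=
  integrable_tformIntegrand (measurable_modulation _ hb)
    (fun y => (norm_modulation _ b y).trans_le (hbC y))
    (h1.comp_add_right _) (h2.comp_add_right _) (h3.comp_add_right _)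

lemma hasDerivAt_flowIntegrand (h1 : Differentiable ℝ f1) (h2 : Differentiable ℝ f2)
    (h3 : Differentiable ℝ f3) (s : ℝ) (p : ℝ × ℝ × ℝ) :
    HasDerivAt (fun s => flowIntegrand t e1 e2 e3 e4 ω c1 c2 c3 k b f1 f2 f3 s p)
      (flowIntegrandDeriv t e1 e2 e3 e4 ω c1 c2 c3 k b f1 f2 f3 s p) s := by
  have translate {f : ℝ → ℂ} (hf : Differentiable ℝ f) (x c : ℝ) :
      HasDerivAt (fun s => f (x + c * s)) (c * deriv f (x + c * s)) s := by
    have motion : HasDerivAt (fun s => x + c * s) c s := by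
      simpa using ((hasDerivAt_id s).const_mul c).const_add x
    exact (hf _).hasDerivAt.scomp s motion
  have hb := hasDerivAt_modulation ω b (e1 * k + e2 * p.1 + e3 * p.2.1 + e4 * p.2.2) s
  refine (((((translate h1 p.1 c1).const_mul _).mul (translate h2 p.2.1 c2).star).mul
    (translate h3 p.2.2 c3)).mul hb).congr_deriv ?_
  simp only [flowIntegrandDeriv, flowIntegrand, tformIntegrand, Pi.mul_apply, ← starRingEnd_apply,
    map_mul, Complex.conj_ofReal]
  ring

lemma norm_flowIntegrand_le {C a1 a2 a3 s : ℝ} {p : ℝ × ℝ × ℝ} (hbC : ∀ y, ‖b y‖ ≤ C)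
    (h1 : ‖f1 (p.1 + c1 * s)‖ ≤ a1) (h2 : ‖f2 (p.2.1 + c2 * s)‖ ≤ a2)
    (h3 : ‖f3 (p.2.2 + c3 * s)‖ ≤ a3) :
    ‖flowIntegrand t e1 e2 e3 e4 ω c1 c2 c3 k b f1 f2 f3 s p‖ ≤ a1 * (a2 * a3) * C := by
  have := (norm_nonneg _).trans h1
  have := (norm_nonneg _).trans h2
  have := (norm_nonneg _).trans h3
  rw [flowIntegrand, norm_tformIntegrand, norm_modulation]
  gcongr
  exact hbC _

lemma norm_flowIntegrandDeriv_le {C C' a1 a2 a3 s : ℝ} {p : ℝ × ℝ × ℝ}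
    (hbC : ∀ y, ‖b y‖ ≤ C) (hbC' : ∀ y : ℝ, ‖y * b y‖ ≤ C')
    (h1 : ‖f1 (p.1 + c1 * s)‖ ≤ a1 ∧ ‖deriv f1 (p.1 + c1 * s)‖ ≤ a1)
    (h2 : ‖f2 (p.2.1 + c2 * s)‖ ≤ a2 ∧ ‖deriv f2 (p.2.1 + c2 * s)‖ ≤ a2)
    (h3 : ‖f3 (p.2.2 + c3 * s)‖ ≤ a3 ∧ ‖deriv f3 (p.2.2 + c3 * s)‖ ≤ a3) :
    ‖flowIntegrandDeriv t e1 e2 e3 e4 ω c1 c2 c3 k b f1 f2 f3 s p‖ ≤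
      a1 * (a2 * a3) * ((|c1| + |c2| + |c3|) * C + |ω| * C') := by
  have scaled (c : ℝ) {z : ℂ} {r : ℝ} (hz : ‖z‖ ≤ r) : ‖(c : ℂ) * z‖ ≤ |c| * r := by
    rw [norm_mul, Complex.norm_real, Real.norm_eq_abs]
    gcongr
  have scaled_I (c : ℝ) {z : ℂ} {r : ℝ} (hz : ‖z‖ ≤ r) : ‖(c : ℂ) * Complex.I * z‖ ≤ |c| * r := by
    rw [mul_assoc]
    exact scaled c (by rwa [norm_mul, Complex.norm_I, one_mul])
  refine (norm_add_le_of_le (norm_add_le_of_le (norm_add_le_of_le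
    (scaled c1 (norm_flowIntegrand_le hbC h1.2 h2.1 h3.1))
    (scaled c2 (norm_flowIntegrand_le hbC h1.1 h2.2 h3.1)))
    (scaled c3 (norm_flowIntegrand_le hbC h1.1 h2.1 h3.2)))
    (scaled_I ω (norm_flowIntegrand_le hbC' h1.1 h2.1 h3.1))).trans_eq ?_
  ring

variable (t e1 e2 e3 e4 ω c1 c2 c3 k) in
lemma exists_integrable_eventually_norm_flowIntegrandDeriv_le {C C' : ℝ}
    (hbC : ∀ y, ‖b y‖ ≤ C) (hbC' : ∀ y : ℝ, ‖y * b y‖ ≤ C') (h1 : IsTranslationDominated f1)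
    (h2 : IsTranslationDominated f2) (h3 : IsTranslationDominated f3) :
    ∃ G : ℝ × ℝ × ℝ → ℝ, Integrable G ∧ ∀ᶠ s in 𝓝 0, ∀ p,
      ‖flowIntegrandDeriv t e1 e2 e3 e4 ω c1 c2 c3 k b f1 f2 f3 s p‖ ≤ G p := by
  obtain ⟨g1, hg1, hfg1⟩ := h1.exists_majorant
  obtain ⟨g2, hg2, hfg2⟩ := h2.exists_majorant
  obtain ⟨g3, hg3, hfg3⟩ := h3.exists_majorant
  have small (c : ℝ) : Tendsto (fun s : ℝ => c * s) (𝓝 0) (𝓝 0) :=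
    (continuous_const_mul c).tendsto' 0 0 (mul_zero c)
  refine ⟨fun p => g1 p.1 * (g2 p.2.1 * g3 p.2.2) * ((|c1| + |c2| + |c3|) * C + |ω| * C'),
    (hg1.mul_prod (hg2.mul_prod hg3)).mul_const _, ?_⟩
  filter_upwards [(small c1).eventually hfg1, (small c2).eventually hfg2,
    (small c3).eventually hfg3] with s hs1 hs2 hs3 p
  exact norm_flowIntegrandDeriv_le hbC hbC' (hs1 p.1) (hs2 p.2.1) (hs3 p.2.2)

lemma integrable_flowIntegrandDeriv {C C' : ℝ} (hb : Measurable b)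
    (hbC : ∀ y, ‖b y‖ ≤ C) (hbC' : ∀ y : ℝ, ‖y * b y‖ ≤ C') (h1 : IsTranslationDominated f1)
    (h2 : IsTranslationDominated f2) (h3 : IsTranslationDominated f3) (s : ℝ) :
    Integrable (flowIntegrandDeriv t e1 e2 e3 e4 ω c1 c2 c3 k b f1 f2 f3 s) :=
  ((((integrable_flowIntegrand hb hbC h1.integrable_deriv h2.integrable h3.integrable s).const_mul
    _).add
  ((integrable_flowIntegrand hb hbC h1.integrable h2.integrable_deriv h3.integrable s).const_mul
    _)).add
  ((integrable_flowIntegrand hb hbC h1.integrable h2.integrable h3.integrable_deriv s).const_mul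
    _)).add
  ((integrable_flowIntegrand (by fun_prop) hbC' h1.integrable h2.integrable h3.integrable
    s).const_mul _)

lemma integral_flowIntegrandDeriv_zero {C C' : ℝ} (hb : Measurable b)
    (hbC : ∀ y, ‖b y‖ ≤ C) (hbC' : ∀ y : ℝ, ‖y * b y‖ ≤ C') (h1 : IsTranslationDominated f1)
    (h2 : IsTranslationDominated f2) (h3 : IsTranslationDominated f3) :
    ∫ p, flowIntegrandDeriv t e1 e2 e3 e4 ω c1 c2 c3 k b f1 f2 f3 0 p =
      c1 * Tform t e1 e2 e3 e4 b (deriv f1) f2 f3 k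
        + c2 * Tform t e1 e2 e3 e4 b f1 (deriv f2) f3 k
        + c3 * Tform t e1 e2 e3 e4 b f1 f2 (deriv f3) k
        + ω * Complex.I * Tform t e1 e2 e3 e4 (fun y => y * b y) f1 f2 f3 k := by
  have I1 : Integrable (tformIntegrand t e1 e2 e3 e4 b (deriv f1) f2 f3 k) :=
    integrable_tformIntegrand hb hbC h1.integrable_deriv h2.integrable h3.integrable
  have I2 : Integrable (tformIntegrand t e1 e2 e3 e4 b f1 (deriv f2) f3 k) :=
    integrable_tformIntegrand hb hbC h1.integrable h2.integrable_deriv h3.integrable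
  have I3 : Integrable (tformIntegrand t e1 e2 e3 e4 b f1 f2 (deriv f3) k) :=
    integrable_tformIntegrand hb hbC h1.integrable h2.integrable h3.integrable_deriv
  have I4 : Integrable (tformIntegrand t e1 e2 e3 e4 (fun y => y * b y) f1 f2 f3 k) :=
    integrable_tformIntegrand (by fun_prop) hbC' h1.integrable h2.integrable h3.integrable
  simp only [flowIntegrandDeriv, flowIntegrand_zero]
  rw [integral_add (by fun_prop) (by fun_prop), integral_add (by fun_prop) (by fun_prop),
    integral_add (by fun_prop) (by fun_prop)]
  simp only [integral_const_mul, tform_eq_integral I1, tform_eq_integral I2, tform_eq_integral I3,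
    tform_eq_integral I4]

theorem hasDerivAt_tform_modulation_translate {C C' : ℝ} (hb : Measurable b)
    (hbC : ∀ y, ‖b y‖ ≤ C) (hbC' : ∀ y : ℝ, ‖y * b y‖ ≤ C') (h1 : IsTranslationDominated f1)
    (h2 : IsTranslationDominated f2) (h3 : IsTranslationDominated f3) :
    HasDerivAt (fun s => Tform t e1 e2 e3 e4 (modulation (ω * s) b) (fun x => f1 (x + c1 * s))
        (fun x => f2 (x + c2 * s)) (fun x => f3 (x + c3 * s)) k)
      (c1 * Tform t e1 e2 e3 e4 b (deriv f1) f2 f3 k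
        + c2 * Tform t e1 e2 e3 e4 b f1 (deriv f2) f3 k
        + c3 * Tform t e1 e2 e3 e4 b f1 f2 (deriv f3) k
        + ω * Complex.I * Tform t e1 e2 e3 e4 (fun y => y * b y) f1 f2 f3 k) 0 := by
  obtain ⟨G, hG, hderiv_le⟩ :=
    exists_integrable_eventually_norm_flowIntegrandDeriv_le t e1 e2 e3 e4 ω c1 c2 c3 k hbC hbC'
      h1 h2 h3
  have integrable_flow (s : ℝ) :
      Integrable (flowIntegrand t e1 e2 e3 e4 ω c1 c2 c3 k b f1 f2 f3 s) :=
    integrable_flowIntegrand hb hbC h1.integrable h2.integrable h3.integrable s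
  have hderiv := hasDerivAt_integral_of_dominated_loc_of_deriv_le hderiv_le
    (.of_forall fun s => (integrable_flow s).aestronglyMeasurable) (integrable_flow 0)
    (integrable_flowIntegrandDeriv hb hbC hbC' h1 h2 h3 0).aestronglyMeasurable
    (.of_forall fun p s hs => hs p) hG
    (.of_forall fun p s _ => hasDerivAt_flowIntegrand h1.differentiable h2.differentiable
      h3.differentiable s p)
  rw [← integral_flowIntegrandDeriv_zero hb hbC hbC' h1 h2 h3]
  exact hderiv.2.congr_of_eventuallyEq
    (.of_forall fun s => tform_eq_integral (integrable_flow s))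

end Flow

section Galilean

variable {t e1 e2 e3 e4 : ℝ}

theorem tform_add_mul_eq_tform_modulation_translate
    (he : e1 ^ 2 + e3 ^ 2 = e2 ^ 2 + e4 ^ 2) (b f1 f2 f3 : ℝ → ℂ) (k s : ℝ) :
    Tform t e1 e2 e3 e4 b f1 f2 f3 (k + e1 * s) =
      Tform t e1 e2 e3 e4 (modulation (-2 * t * s) b) (fun x => f1 (x + -e2 * s))
        (fun x => f2 (x + e3 * s)) (fun x => f3 (x + -e4 * s)) k := by
  unfold Tform
  rw [← integral_add_right_eq_self _ (-e2 * s)]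
  refine integral_congr_ae (.of_forall fun l => ?_)
  beta_reduce
  rw [← integral_add_right_eq_self _ (e3 * s)]
  refine integral_congr_ae (.of_forall fun m => ?_)
  beta_reduce
  rw [← integral_add_right_eq_self _ (-e4 * s)]
  refine integral_congr_ae (.of_forall fun n => ?_)
  have symbol_argument : e1 * (k + e1 * s) + e2 * (l + -e2 * s) + e3 * (m + e3 * s)
      + e4 * (n + -e4 * s) = e1 * k + e2 * l + e3 * m + e4 * n := by
    linear_combination s * he
  have phase : -(k + e1 * s) ^ 2 + (l + -e2 * s) ^ 2 - (m + e3 * s) ^ 2 + (n + -e4 * s) ^ 2 =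
      -(k ^ 2) + l ^ 2 - m ^ 2 + n ^ 2 - 2 * s * (e1 * k + e2 * l + e3 * m + e4 * n) := by
    linear_combination -s ^ 2 * he
  have phase_factor : Complex.exp (Complex.I * t * ((-(k ^ 2) + l ^ 2 - m ^ 2 + n ^ 2
      - 2 * s * (e1 * k + e2 * l + e3 * m + e4 * n) : ℝ) : ℂ)) =
      Complex.exp (Complex.I * t * ((-(k ^ 2) + l ^ 2 - m ^ 2 + n ^ 2 : ℝ) : ℂ)) *
        Complex.exp ((-2 * t * s * (e1 * k + e2 * l + e3 * m + e4 * n) : ℝ) * Complex.I) := by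
    rw [← Complex.exp_add]
    push_cast
    ring_nf
  simp only [symbol_argument, phase, phase_factor, modulation]
  ring

end Galilean

theorem statement_11_general {t e1 e2 e3 e4 C C' : ℝ} (he : e1 ^ 2 + e3 ^ 2 = e2 ^ 2 + e4 ^ 2)
    {b f1 f2 f3 : ℝ → ℂ} (hb : Measurable b) (hbC : ∀ y, ‖b y‖ ≤ C)
    (hbC' : ∀ y : ℝ, ‖y * b y‖ ≤ C') (h1 : IsTranslationDominated f1)
    (h2 : IsTranslationDominated f2) (h3 : IsTranslationDominated f3) (k : ℝ) :
    e1 * deriv (fun k' => Tform t e1 e2 e3 e4 b f1 f2 f3 k') k =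
      -e2 * Tform t e1 e2 e3 e4 b (deriv f1) f2 f3 k
      + e3 * Tform t e1 e2 e3 e4 b f1 (deriv f2) f3 k
      - e4 * Tform t e1 e2 e3 e4 b f1 f2 (deriv f3) k
      - 2 * Complex.I * t * Tform t e1 e2 e3 e4 (fun y => y * b y) f1 f2 f3 k := by
  have chain_rule : deriv (fun s => Tform t e1 e2 e3 e4 b f1 f2 f3 (k + e1 * s)) 0 =
      e1 * deriv (Tform t e1 e2 e3 e4 b f1 f2 f3) k := by
    rw [deriv_comp_mul_left e1 (fun x => Tform t e1 e2 e3 e4 b f1 f2 f3 (k + x)),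
      deriv_comp_const_add, mul_zero, add_zero, Complex.real_smul]
  rw [← chain_rule, funext (tform_add_mul_eq_tform_modulation_translate he b f1 f2 f3 k),
    (hasDerivAt_tform_modulation_translate hb hbC hbC' h1 h2 h3).deriv]
  push_cast
  ring

/-- Commutation identity:
`ε₁ ∂_k 𝒯_b(f₁,f₂,f₃) = −ε₂ 𝒯_b(f₁',f₂,f₃) + ε₃ 𝒯_b(f₁,f₂',f₃) − ε₄ 𝒯_b(f₁,f₂,f₃')
  − 2it 𝒯_{y·b}(f₁,f₂,f₃)`. -/
theorem statement_11 (t : ℝ) (e1 e2 e3 e4 : ℝ)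
    (h1 : e1 = 1 ∨ e1 = -1) (h2 : e2 = 1 ∨ e2 = -1)
    (h3 : e3 = 1 ∨ e3 = -1) (h4 : e4 = 1 ∨ e4 = -1)
    (b f1 f2 f3 : SchwartzMap ℝ ℂ) (k : ℝ) :
    (e1 : ℂ) * deriv (fun k' => Tform t e1 e2 e3 e4 b f1 f2 f3 k') k =
      -(e2 : ℂ) * Tform t e1 e2 e3 e4 b (fun l => deriv (f1 : ℝ → ℂ) l) f2 f3 k
      + (e3 : ℂ) * Tform t e1 e2 e3 e4 b f1 (fun m => deriv (f2 : ℝ → ℂ) m) f3 k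
      - (e4 : ℂ) * Tform t e1 e2 e3 e4 b f1 f2 (fun n => deriv (f3 : ℝ → ℂ) n) k
      - 2 * Complex.I * (t : ℂ) *
          Tform t e1 e2 e3 e4 (fun y => (y : ℂ) * b y) f1 f2 f3 k := by
  have he : e1 ^ 2 + e3 ^ 2 = e2 ^ 2 + e4 ^ 2 := by
    rw [sq_eq_one_iff.2 h1, sq_eq_one_iff.2 h2, sq_eq_one_iff.2 h3, sq_eq_one_iff.2 h4]
  exact statement_11_general he b.continuous.measurable (SchwartzMap.norm_le_seminorm ℂ b)
    (fun y => by simpa using SchwartzMap.norm_pow_mul_le_seminorm ℂ b 1 y)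
    (.of_schwartzMap f1) (.of_schwartzMap f2) (.of_schwartzMap f3) k
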